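/- Let d be an odd prime, ω = exp(2πi/d), let a be an even integer with d not dividing a, and let b = c/2 for some odd integer c, so that ab is an integer. Set b' = b + d/2 = (c+d)/2, which is an integer. Then ∑_{i=0}^{d−1} ω^{a i² + abi} = ε_d √d (a/d) · ω^{−a b'²/4} if b' is even, and ∑_{i=0}^{d−1} ω^{a i² + abi} = ε_d √d (a/d) · ω^{−a(d−b')²/4} if b' is odd. -/

import Mathlib

/-!
Since `a` is even, `a * c / 2 ≡ a * b' (mod d)`; whichever of `b'` and `d - b'` is even, half of it
(up to sign) completes the square, so the shifted sum is a power of `ω` times the pure Gauss sum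
`∑ ω ^ (a * i ^ 2)` (`complete_square`). Over the prime field this pure sum equals the Gauss sum of
the quadratic character twisted by `a`, so it is `(a/d)` times the sum for `a = 1` (`sum_sq_eq`).

The remaining point is the exact value, sign included, of `G = ∑ exp (2 π i r ^ 2 / p)` for odd `p`
(`gauss_sum_one`). It is obtained from the theta function `∑ exp (-π w n ^ 2)` with
`w = ε - 2 i / p`, as `ε → 0+`. There `exp (-π w n ^ 2)` is a `p`-periodic factor times the Gaussian
`exp (-π ε n ^ 2)`, and a periodic function summed against a wide Gaussian is asymptotic to its mean
divided by the square root of the Gaussian parameter (`twisted_tendsto`, by Poisson summation on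
each residue class). On the other side of Jacobi's transformation `w ↦ 1 / w` the periodic factor
has period `2`. Comparing the two asymptotics gives the Landsberg-Schaar relation
(`gauss_sum_dual`), which expresses `G` through a sum of two terms.
-/

noncomputable section

/-- `ε_d = 1` if `d ≡ 1 (mod 4)` and `ε_d = i` if `d ≡ 3 (mod 4)`. -/
def epsd (d : ℕ) : ℂ := if d % 4 = 1 then 1 else Complex.I

open scoped Classical in
/-- The Legendre symbol `(a/d)` for a prime `d`. -/
def legSym (d : ℕ) (a : ℤ) : ℤ :=
  if (a : ZMod d) = 0 then 0 else if IsSquare (a : ZMod d) then 1 else -1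

section

open Filter Topology

/-! ### Square roots in the right half-plane -/

lemma csqrt_re_pos {a : ℂ} (ha : 0 < a.re) : 0 < (a ^ (1 / 2 : ℂ)).re := by
  have h0 : a ≠ 0 := by rintro rfl; simp at ha
  have h := abs_lt.1 (Complex.abs_arg_lt_pi_div_two_iff.2 (Or.inl ha))
  rw [Complex.cpow_def_of_ne_zero h0, Complex.exp_re]
  have e : (Complex.log a * (1 / 2)).im = a.arg / 2 := by
    have : (Complex.log a * (1 / 2)) = Complex.log a * ((1 / 2 : ℝ) : ℂ) := by push_cast; rfl
    rw [this, Complex.im_mul_ofReal, Complex.log_im]; ring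
  rw [e]
  have := Real.pi_pos
  exact mul_pos (Real.exp_pos _) (Real.cos_pos_of_mem_Ioo ⟨by linarith, by linarith⟩)

lemma csqrt_unique {a x : ℂ} (hx : 0 < x.re) (h : x ^ 2 = a) : a ^ (1 / 2 : ℂ) = x := by
  rw [← h, one_div]; exact Complex.sq_cpow_two_inv hx

lemma csqrt_sq (a : ℂ) : (a ^ (1 / 2 : ℂ)) ^ 2 = a := by
  rw [one_div]; exact Complex.cpow_nat_inv_pow a two_ne_zero

/-- The principal square root is continuous at squares of numbers in the open right half-plane. -/
lemma tendsto_csqrt {α : Type*} {l : Filter α} {f : α → ℂ} {x : ℂ} (hx : 0 < x.re)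
    (h : Tendsto f l (𝓝 (x ^ 2))) : Tendsto (fun t => f t ^ (1 / 2 : ℂ)) l (𝓝 x) := by
  have hs : x ^ 2 ∈ Complex.slitPlane := by
    rw [Complex.mem_slitPlane_iff]
    by_cases hi : x.im = 0
    · left
      rw [sq, Complex.mul_re, hi]
      simp only [mul_zero, sub_zero]
      positivity
    · right
      rw [sq, Complex.mul_im, mul_comm x.im, ← two_mul]
      exact mul_ne_zero two_ne_zero (mul_ne_zero hx.ne' hi)
  have := h.cpow (tendsto_const_nhds (x := (1 / 2 : ℂ))) hs
  rwa [csqrt_unique hx rfl] at this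

/-- No branch jump occurs, since the quotient of the two roots stays in the right half-plane. -/
lemma csqrt_div {x : ℝ} {b : ℂ} (hx : 0 < x) (hb : 0 < b.re) :
    (x : ℂ) ^ (1 / 2 : ℂ) / b ^ (1 / 2 : ℂ) = (x / b) ^ (1 / 2 : ℂ) := by
  have hs : (x : ℂ) ^ (1 / 2 : ℂ) = (Real.sqrt x : ℂ) := by
    apply csqrt_unique
    · simpa using hx
    · rw [← Complex.ofReal_pow, Real.sq_sqrt hx.le]
  symm
  apply csqrt_unique
  · have hr := csqrt_re_pos hb
    have h0 : b ^ (1 / 2 : ℂ) ≠ 0 := by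
      intro h
      rw [h] at hr
      exact lt_irrefl _ hr
    rw [hs, div_eq_mul_inv, Complex.re_ofReal_mul, Complex.inv_re]
    have := Real.sqrt_pos.2 hx
    have := Complex.normSq_pos.2 h0
    positivity
  · rw [div_pow, csqrt_sq, csqrt_sq]

/-! ### Gaussian series with periodic coefficients -/

/-- Poisson summation over one residue class modulo `N`. The dual series is dominated by its `n = 0`
term as `Re (1 / a)` becomes large. -/
lemma residue_poisson {a : ℂ} (ha : 0 < a.re) {N : ℕ} (hN : 0 < N) (r : ℂ) :
    a ^ (1 / 2 : ℂ) * ∑' k : ℤ, Complex.exp (-Real.pi * a * (k * N + r) ^ 2) =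
      1 / N * ∑' n : ℤ, Complex.exp (2 * Real.pi * Complex.I * n * (r / N)
        - Real.pi * n ^ 2 * (1 / a / N ^ 2)) := by
  have h0 : a ≠ 0 := by rintro rfl; simp at ha
  have hN0 : (N : ℂ) ≠ 0 := by exact_mod_cast hN.ne'
  have haN : 0 < (a * N ^ 2).re := by
    have : a * (N : ℂ) ^ 2 = a * ((N ^ 2 : ℝ) : ℂ) := by push_cast; rfl
    rw [this, Complex.re_mul_ofReal]; positivity
  have hs : (a * N ^ 2) ^ (1 / 2 : ℂ) = a ^ (1 / 2 : ℂ) * N := by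
    apply csqrt_unique
    · have := csqrt_re_pos ha
      have e : a ^ (1 / 2 : ℂ) * (N : ℂ) = a ^ (1 / 2 : ℂ) * ((N : ℝ) : ℂ) := by push_cast; rfl
      rw [e, Complex.re_mul_ofReal]; positivity
    · rw [mul_pow, csqrt_sq]
  have hs0 : a ^ (1 / 2 : ℂ) ≠ 0 := by
    intro h
    have := csqrt_re_pos ha
    rw [h] at this
    exact lt_irrefl _ this
  have key := Complex.tsum_exp_neg_quadratic haN (-a * N * r)
  rw [hs] at key
  have e1 : ∀ k : ℤ, Complex.exp (-Real.pi * a * (k * N + r) ^ 2) =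
      Complex.exp (-Real.pi * a * r ^ 2) * Complex.exp (-Real.pi * (a * N ^ 2) * k ^ 2
        + 2 * Real.pi * (-a * N * r) * k) := by
    intro k; rw [← Complex.exp_add]; congr 1; ring
  simp_rw [e1]
  rw [tsum_mul_left, key]
  have e2 : ∀ n : ℤ, Complex.exp (2 * Real.pi * Complex.I * n * (r / N)
      - Real.pi * n ^ 2 * (1 / a / N ^ 2)) = Complex.exp (-Real.pi * a * r ^ 2) *
      Complex.exp (-Real.pi / (a * N ^ 2) * (n + Complex.I * (-a * N * r)) ^ 2) := by
    intro n
    rw [← Complex.exp_add]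
    congr 1
    field_simp
    ring_nf
    simp only [Complex.I_sq]
    ring
  simp_rw [e2]
  rw [tsum_mul_left]
  field_simp

/-- As `Re s → ∞` only the `n = 0` term of the dual series survives, by dominated convergence. -/
lemma dual_tendsto {α : Type*} {l : Filter α} {s : α → ℂ} [l.IsCountablyGenerated]
    (hs : Tendsto (fun x => (s x).re) l atTop) (r : ℝ) :
    Tendsto (fun x => ∑' n : ℤ, Complex.exp (2 * Real.pi * Complex.I * n * r
        - Real.pi * n ^ 2 * s x)) l (𝓝 1) := by
  have hnorm : ∀ x (n : ℤ), ‖Complex.exp (2 * Real.pi * Complex.I * n * r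
        - Real.pi * n ^ 2 * s x)‖ = Real.exp (-Real.pi * n ^ 2 * (s x).re) := by
    intro x n
    rw [Complex.norm_exp]
    congr 1
    have e : (2 * Real.pi * Complex.I * n * r - Real.pi * n ^ 2 * s x : ℂ) =
      ((2 * Real.pi * n * r : ℝ) : ℂ) * Complex.I - ((Real.pi * n ^ 2 : ℝ) : ℂ) * s x := by
      push_cast; ring
    rw [e, Complex.sub_re, Complex.re_ofReal_mul, Complex.re_ofReal_mul, Complex.I_re]
    ring
  have h1 : (1 : ℂ) = ∑' n : ℤ, if n = 0 then 1 else 0 := by simp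
  rw [h1]
  have hb := ((summable_jacobiTheta₂_term_iff 0 Complex.I).2 (by simp)).norm
  apply tendsto_tsum_of_dominated_convergence hb
  · intro n
    split_ifs with h
    · simpa [h] using tendsto_const_nhds
    · rw [tendsto_zero_iff_norm_tendsto_zero]
      simp_rw [hnorm]
      apply Real.tendsto_exp_atBot.comp
      apply Tendsto.const_mul_atTop_of_neg _ hs
      have := Real.pi_pos
      have : (0 : ℝ) < (n : ℝ) ^ 2 := by positivity
      nlinarith
  · filter_upwards [hs.eventually_ge_atTop 1] with x hx n
    rw [hnorm, norm_jacobiTheta₂_term, Real.exp_le_exp]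
    simp only [Complex.I_im, Complex.zero_im]
    have := Real.pi_pos
    have : 0 ≤ Real.pi * (n : ℝ) ^ 2 := by positivity
    nlinarith

lemma summable_gauss {b : ℂ} (hb : 0 < b.re) {N : ℕ} (hN : 0 < N) (r : ℂ) :
    Summable fun k : ℤ => Complex.exp (-Real.pi * b * (k * N + r) ^ 2) := by
  have hN0 : (0 : ℝ) < N := by exact_mod_cast hN
  have h := (summable_jacobiTheta₂_term_iff (Complex.I * b * N * r)
    (Complex.I * (b * ((N ^ 2 : ℝ) : ℂ)))).2 (by
      rw [Complex.I_mul_im, Complex.re_mul_ofReal]; positivity)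
  refine (h.mul_left (Complex.exp (-Real.pi * b * r ^ 2))).congr fun k => ?_
  rw [jacobiTheta₂_term, ← Complex.exp_add]
  congr 1
  push_cast
  ring_nf
  simp only [Complex.I_sq]
  ring

/-- A Gaussian series with `N`-periodic coefficients, split according to residue classes. -/
lemma tsum_residues {a : ℂ} (ha : 0 < a.re) {N : ℕ} (hN : 0 < N) (c : ℤ → ℂ)
    (hc : ∀ k r : ℤ, c (k * N + r) = c r) :
    ∑' n : ℤ, c n * Complex.exp (-Real.pi * a * n ^ 2) = ∑ r : Fin N, ∑' k : ℤ, c (r : ℕ) *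
      Complex.exp (-Real.pi * a * (k * N + (r : ℕ)) ^ 2) := by
  have : NeZero N := ⟨hN.ne'⟩
  let e : Fin N × ℤ ≃ ℤ := (Equiv.prodComm (Fin N) ℤ).trans (Int.divModEquiv N).symm
  let f : Fin N × ℤ → ℂ := fun p => c (p.1 : ℕ) *
      Complex.exp (-Real.pi * a * (p.2 * N + (p.1 : ℕ)) ^ 2)
  have hf : ∀ p, c (e p) * Complex.exp (-Real.pi * a * (e p : ℤ) ^ 2) = f p := by
    rintro ⟨r, k⟩
    have he : e (r, k) = k * N + ((r : ℕ) : ℤ) := rfl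
    simp only [f]
    rw [he, hc]
    push_cast
    rfl
  have hsm : Summable f := by
    apply Summable.of_norm
    refine (summable_prod_of_nonneg fun _ => norm_nonneg _).2 ⟨fun r => ?_, ?_⟩
    · have h := ((summable_gauss ha hN ((r : ℕ) : ℂ)).mul_left (c (r : ℕ))).norm
      exact h
    · exact (hasSum_fintype _).summable
  rw [← e.tsum_eq, tsum_congr hf, hsm.tsum_prod, tsum_fintype]

/-- An `N`-periodic function summed against the Gaussian `exp (-π a n ^ 2)` is asymptotic to its mean
over a period times `a ^ (-1/2)`. The parameter `a` is complex and
tends to `0` in the right half-plane in such a way that `Re (1 / a) → ∞`. -/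
lemma twisted_tendsto {α : Type*} {l : Filter α} [l.IsCountablyGenerated] {a : α → ℂ}
    (ha : ∀ᶠ x in l, 0 < (a x).re)
    (hs : Tendsto (fun x => (1 / a x).re) l atTop) {N : ℕ} (hN : 0 < N) (c : ℤ → ℂ)
    (hc : ∀ k r : ℤ, c (k * N + r) = c r) :
    Tendsto (fun x => a x ^ (1 / 2 : ℂ) * ∑' n : ℤ, c n * Complex.exp (-Real.pi * a x * n ^ 2)) l
      (𝓝 (1 / N * ∑ r ∈ Finset.range N, c r)) := by
  have : NeZero N := ⟨hN.ne'⟩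
  have lim : Tendsto (fun x => ∑ r : Fin N, c (r : ℕ) * (1 / N * ∑' n : ℤ,
      Complex.exp (2 * Real.pi * Complex.I * n * (((r : ℕ) / N : ℝ) : ℂ)
        - Real.pi * n ^ 2 * (1 / a x / N ^ 2)))) l
      (𝓝 (∑ r : Fin N, c (r : ℕ) * (1 / N * 1))) := by
    refine tendsto_finsetSum _ fun r _ => ?_
    refine (Tendsto.const_mul _ (dual_tendsto ?_ _)).const_mul _
    have e : ∀ x, (1 / a x / (N : ℂ) ^ 2).re = (1 / a x).re * (1 / (N : ℝ) ^ 2) := by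
      intro x
      rw [← Complex.re_mul_ofReal]; push_cast; rw [mul_one_div]
    simp_rw [e]
    exact hs.atTop_mul_const (by positivity)
  have e2 : (1 / N * ∑ r ∈ Finset.range N, c r : ℂ) = ∑ r : Fin N, c (r : ℕ) * (1 / N * 1) := by
    rw [Finset.sum_range, Finset.mul_sum]
    exact Finset.sum_congr rfl fun _ _ => by ring
  rw [e2]
  refine lim.congr' ?_
  filter_upwards [ha] with x hx
  have h1 : ∀ r : Fin N, a x ^ (1 / 2 : ℂ) * ∑' k : ℤ, c (r : ℕ) *
      Complex.exp (-Real.pi * a x * (k * N + (r : ℕ)) ^ 2) = c (r : ℕ) * (1 / N * ∑' n : ℤ,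
      Complex.exp (2 * Real.pi * Complex.I * n * (((r : ℕ) / N : ℝ) : ℂ)
        - Real.pi * n ^ 2 * (1 / a x / N ^ 2))) := by
    intro r
    rw [tsum_mul_left, mul_left_comm, residue_poisson hx hN]
    push_cast; rfl
  rw [← Finset.sum_congr rfl fun r _ => h1 r, ← Finset.mul_sum]
  congr 1
  exact (tsum_residues hx hN c hc).symm

/-! ### The sign of the quadratic Gauss sum -/

/-- The Landsberg-Schaar relation between the quadratic Gauss sum of odd modulus `p` and a sum of two
terms. -/
lemma gauss_sum_dual {p : ℕ} (hp : Odd p) :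
    ∑ r ∈ Finset.range p, Complex.exp (2 * Real.pi * Complex.I * (r : ℤ) ^ 2 / p) =
      Real.sqrt p / (1 - Complex.I) * (1 + Complex.exp (-Real.pi * Complex.I * p / 2)) := by
  have hp0 : 0 < p := hp.pos
  have hpR : (0 : ℝ) < p := by exact_mod_cast hp0
  have hpC : (p : ℂ) ≠ 0 := by exact_mod_cast hp0.ne'
  let c₁ : ℤ → ℂ := fun n => Complex.exp (2 * Real.pi * Complex.I * n ^ 2 / p)
  let c₂ : ℤ → ℂ := fun n => Complex.exp (-Real.pi * Complex.I * p * n ^ 2 / 2)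
  let w : ℝ → ℂ := fun ε => ε - 2 * Complex.I / p
  -- `z` is chosen so that `1 / w = i * p / 2 + 1 / z`: the first summand gives the periodic factor
  -- `c₂`, and `1 / z` is the small Gaussian parameter on the dual side.
  let z : ℝ → ℂ := fun ε => 2 * Complex.I * w ε / (p * ε)
  have hc₁ : ∀ k r : ℤ, c₁ (k * p + r) = c₁ r := by
    intro k r
    simp only [c₁]
    rw [Complex.exp_eq_exp_iff_exists_int]
    refine ⟨k ^ 2 * p + 2 * k * r, ?_⟩
    push_cast
    field_simp
    ring
  have hc₂ : ∀ k r : ℤ, c₂ (k * (2 : ℕ) + r) = c₂ r := by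
    intro k r
    simp only [c₂]
    rw [Complex.exp_eq_exp_iff_exists_int]
    refine ⟨-(p * (k ^ 2 + k * r)), ?_⟩
    push_cast
    field_simp
    ring
  have hwre : ∀ ε, (w ε).re = ε := by
    intro ε
    have : w ε = (ε : ℂ) - ((2 / p : ℝ) : ℂ) * Complex.I := by
      simp only [w]; push_cast; ring
    rw [this, Complex.sub_re, Complex.re_ofReal_mul]
    simp
  have hz : ∀ ε : ℝ, 0 < ε → z ε = ((4 / p ^ 2 * ε⁻¹ : ℝ) : ℂ) + ((2 / p : ℝ) : ℂ) * Complex.I := by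
    intro ε hε
    have : (ε : ℂ) ≠ 0 := by exact_mod_cast hε.ne'
    simp only [z, w]
    push_cast
    field_simp
    ring_nf
    simp only [Complex.I_sq]
    ring
  have hzre : ∀ ε : ℝ, 0 < ε → (z ε).re = 4 / p ^ 2 * ε⁻¹ := by
    intro ε hε
    rw [hz ε hε, Complex.add_re, Complex.re_ofReal_mul, Complex.ofReal_re]
    simp
  have hpos : ∀ᶠ ε : ℝ in 𝓝[>] 0, 0 < ε := eventually_mem_nhdsWithin
  have hδre : ∀ ε : ℝ, 0 < ε → 0 < (1 / z ε).re := by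
    intro ε hε
    have h : 0 < (z ε).re := by rw [hzre ε hε]; positivity
    have h0 : z ε ≠ 0 := by
      intro h'
      rw [h'] at h
      exact lt_irrefl _ h
    rw [one_div, Complex.inv_re]
    exact div_pos h (Complex.normSq_pos.2 h0)
  -- `T₁` and `T₂` are the asymptotics of the two sides of Jacobi's transformation; `T₃` and `T₄` are
  -- the limits of the square roots by which their normalisations differ.
  have T₁ := twisted_tendsto (l := 𝓝[>] (0 : ℝ)) (a := fun ε : ℝ => (ε : ℂ))
    (by filter_upwards [hpos] with ε hε; simpa using hε)
    (by
      refine tendsto_inv_nhdsGT_zero.congr fun ε => ?_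
      rw [one_div, ← Complex.ofReal_inv, Complex.ofReal_re]) hp0 c₁ hc₁
  have T₂ := twisted_tendsto (l := 𝓝[>] (0 : ℝ)) (a := fun ε : ℝ => 1 / z ε)
    (by filter_upwards [hpos] with ε hε using hδre ε hε)
    (by
      refine (tendsto_inv_nhdsGT_zero.const_mul_atTop
        (show (0 : ℝ) < 4 / p ^ 2 by positivity)).congr' ?_
      filter_upwards [hpos] with ε hε
      rw [one_div_one_div, hzre ε hε]) two_pos c₂ hc₂
  have hw : Tendsto w (𝓝[>] 0) (𝓝 (-2 * Complex.I / p)) := by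
    have : Continuous w := by fun_prop
    have := (this.tendsto 0).mono_left (nhdsWithin_le_nhds (s := Set.Ioi 0))
    convert this using 2
    simp only [w]
    push_cast
    ring
  have hsq : ((Real.sqrt p : ℝ) : ℂ) ^ 2 = p := by
    rw [← Complex.ofReal_pow, Real.sq_sqrt hpR.le, Complex.ofReal_natCast]
  have hsq0 : ((Real.sqrt p : ℝ) : ℂ) ≠ 0 := by
    exact_mod_cast (Real.sqrt_pos.2 hpR).ne'
  have T₃ : Tendsto (fun ε => w ε ^ (1 / 2 : ℂ)) (𝓝[>] 0)
      (𝓝 ((1 - Complex.I) / Real.sqrt p)) := by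
    apply tendsto_csqrt
    · rw [Complex.div_ofReal_re]
      simpa using hp0
    · convert hw using 2
      rw [div_pow, hsq]
      congr 1
      ring_nf
      simp only [Complex.I_sq]
      ring
  have T₄ : Tendsto (fun ε => (2 * Complex.I / p * w ε) ^ (1 / 2 : ℂ)) (𝓝[>] 0)
      (𝓝 ((2 / p : ℝ) : ℂ)) := by
    apply tendsto_csqrt
    · rw [Complex.ofReal_re]; positivity
    · convert hw.const_mul (2 * Complex.I / p) using 2
      push_cast
      field_simp
      simp only [Complex.I_sq]
      ring
  have h1I : (1 - Complex.I) ≠ 0 := by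
    intro h
    have := congrArg Complex.re h
    simp at this
  have T₅ := (T₄.div T₃ (div_ne_zero h1I hsq0)).mul T₂
  have key := tendsto_nhds_unique T₁ (T₅.congr' ?_)
  · have e : (∑ r ∈ Finset.range 2, c₂ r) = 1 + Complex.exp (-Real.pi * Complex.I * p / 2) := by
      simp [Finset.sum_range_succ, c₂]
    rw [e] at key
    have e' : ∑ r ∈ Finset.range p, Complex.exp (2 * Real.pi * Complex.I * (r : ℤ) ^ 2 / p) =
      p * (1 / p * ∑ r ∈ Finset.range p, c₁ r) := by
      rw [← mul_assoc, mul_one_div_cancel hpC, one_mul]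
    rw [e', key]
    push_cast
    field_simp
  · filter_upwards [hpos] with ε hε
    have hεC : (ε : ℂ) ≠ 0 := by exact_mod_cast hε.ne'
    have hw0 : w ε ≠ 0 := by
      intro h
      have := hwre ε
      rw [h, Complex.zero_re] at this
      exact hε.ne this
    have hP := Complex.tsum_exp_neg_mul_int_sq (a := w ε) (by rw [hwre]; exact hε)
    have e₁ : ∀ n : ℤ, c₁ n * Complex.exp (-Real.pi * ε * n ^ 2) =
        Complex.exp (-Real.pi * w ε * n ^ 2) := by
      intro n
      simp only [c₁, w]
      rw [← Complex.exp_add]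
      congr 1
      ring
    have hinv : 1 / w ε = Complex.I * p / 2 + 1 / z ε := by
      have hwe : (ε : ℂ) = w ε + 2 * Complex.I / p := by simp only [w]; ring
      simp only [z]
      rw [one_div_div]
      have : (p * ε : ℂ) = p * w ε + 2 * Complex.I := by
        rw [hwe]; field_simp
      rw [this]
      field_simp
      ring_nf
      simp only [Complex.I_sq]
      ring
    have e₂ : ∀ n : ℤ, c₂ n * Complex.exp (-Real.pi * (1 / z ε) * n ^ 2) =
        Complex.exp (-Real.pi / w ε * n ^ 2) := by
      intro n
      simp only [c₂]
      rw [← Complex.exp_add, div_eq_mul_one_div _ (w ε), hinv]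
      congr 1
      ring
    simp_rw [e₁, e₂]
    rw [hP]
    have hd := csqrt_div hε (hδre ε hε)
    have hq : (ε : ℂ) / (1 / z ε) = 2 * Complex.I / p * w ε := by
      simp only [z]
      field_simp
    rw [hq] at hd
    have hr := csqrt_re_pos (hδre ε hε)
    have h0 : (1 / z ε) ^ (1 / 2 : ℂ) ≠ 0 := by
      intro h
      rw [h] at hr
      exact lt_irrefl _ hr
    simp only [Pi.div_apply]
    rw [← hd]
    -- With the root opaque, `field_simp` does not rewrite inside it.
    generalize (1 / z ε) ^ (1 / 2 : ℂ) = D at h0 ⊢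
    field_simp

/-- Gauss's evaluation of the quadratic Gauss sum, including the sign, for every odd modulus. -/
lemma gauss_sum_one {p : ℕ} (hp : Odd p) :
    ∑ r ∈ Finset.range p, Complex.exp (2 * Real.pi * Complex.I * (r : ℤ) ^ 2 / p) =
      epsd p * Real.sqrt p := by
  rw [gauss_sum_dual hp]
  have h1I : (1 - Complex.I) ≠ 0 := by
    intro h
    have := congrArg Complex.re h
    simp at this
  have hI : Complex.exp (-Real.pi * Complex.I / 2) = -Complex.I := by
    rw [show (-Real.pi * Complex.I / 2 : ℂ) = -(Real.pi / 2 * Complex.I) by ring,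
      Complex.exp_neg, Complex.exp_pi_div_two_mul_I, Complex.inv_I]
  have hpow : Complex.exp (-Real.pi * Complex.I * p / 2) = (-Complex.I) ^ p := by
    rw [← hI, ← Complex.exp_nat_mul]
    congr 1
    ring
  have h4 : (-Complex.I) ^ 4 = 1 := by rw [neg_pow, Complex.I_pow_four]; norm_num
  rw [hpow, ← Nat.div_add_mod p 4, pow_add, pow_mul, h4, one_pow, one_mul, Nat.div_add_mod]
  unfold epsd
  have : p % 4 = 1 ∨ p % 4 = 3 := by obtain ⟨k, rfl⟩ := hp; omega
  rcases this with h | h <;> rw [h]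
  · simp only [if_true, pow_one]
    field_simp
    ring
  · simp only [OfNat.ofNat_ne_one, if_false]
    have : (-Complex.I) ^ 3 = Complex.I := by
      rw [neg_pow, Complex.I_pow_three]; norm_num
    rw [this]
    field_simp
    ring_nf
    simp only [Complex.I_sq]
    ring

end

/-! ### Reduction to the pure Gauss sum -/

lemma sum_range_zmod {d : ℕ} [NeZero d] (f : ZMod d → ℂ) :
    ∑ i ∈ Finset.range d, f ((i : ℤ) : ZMod d) = ∑ x : ZMod d, f x := by
  refine Finset.sum_nbij' (fun i => ((i : ℤ) : ZMod d)) (fun x => x.val) ?_ ?_ ?_ ?_ ?_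
  · simp
  · intro x _; simpa using ZMod.val_lt x
  · intro i hi; simpa using ZMod.val_cast_of_lt (Finset.mem_range.1 hi)
  · intro x _; simp
  · simp

lemma legSym_eq {d : ℕ} [Fact d.Prime] (a : ℤ) : legSym d a = quadraticChar (ZMod d) a := by
  unfold legSym
  rw [quadraticChar_apply, quadraticCharFun]
  congr

/-- Each `y` is a square `1 + χ y` times, where `χ` is the quadratic character, and the sum of a
nontrivial additive character vanishes. -/
lemma sum_sq_eq_gaussSum {d : ℕ} [Fact d.Prime] (hd : d ≠ 2) {a : ZMod d} (ha : a ≠ 0) :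
    ∑ x : ZMod d, ZMod.stdAddChar (a * x ^ 2) =
      gaussSum ((quadraticChar (ZMod d)).ringHomComp (Int.castRingHom ℂ))
        (AddChar.mulShift ZMod.stdAddChar a) := by
  have h1 : ∑ x : ZMod d, ZMod.stdAddChar (a * x ^ 2) =
      ∑ y : ZMod d, ((quadraticChar (ZMod d) y + 1 : ℤ) : ℂ) * ZMod.stdAddChar (a * y) := by
    rw [← Finset.sum_fiberwise Finset.univ (fun x : ZMod d => x ^ 2)]
    refine Finset.sum_congr rfl fun y _ => ?_
    rw [← quadraticChar_card_sqrts (by rwa [ZMod.ringChar_zmod_n])]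
    rw [Finset.sum_congr rfl (g := fun _ => (ZMod.stdAddChar (a * y) : ℂ))]
    · rw [Finset.sum_const, nsmul_eq_mul]
      congr 2
      congr 1
      simp
    · intro x hx; rw [(Finset.mem_filter.1 hx).2]
  have h0 : ∑ y : ZMod d, (ZMod.stdAddChar (a * y) : ℂ) = 0 := by
    have := AddChar.sum_mulShift a (ZMod.isPrimitive_stdAddChar d)
    simpa [mul_comm, ha] using this
  rw [h1, gaussSum]
  push_cast
  simp_rw [add_mul, one_mul]
  rw [Finset.sum_add_distrib, h0, add_zero]
  rfl

lemma sum_sq_eq {d : ℕ} [Fact d.Prime] (hd : d ≠ 2) {a : ℤ} (ha : (a : ZMod d) ≠ 0) :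
    ∑ x : ZMod d, ZMod.stdAddChar ((a : ZMod d) * x ^ 2) =
      (legSym d a : ℂ) * ∑ x : ZMod d, ZMod.stdAddChar (x ^ 2) := by
  have h1 := sum_sq_eq_gaussSum hd (one_ne_zero (α := ZMod d))
  simp only [one_mul] at h1
  rw [h1, sum_sq_eq_gaussSum hd ha, legSym_eq, AddChar.mulShift_one]
  have h2 : ((quadraticChar (ZMod d) a : ℤ) : ℂ) * (quadraticChar (ZMod d) a : ℤ) = 1 := by
    rw [← Int.cast_mul, ← sq, quadraticChar_sq_one ha, Int.cast_one]
  rw [← gaussSum_mulShift _ ZMod.stdAddChar (Units.mk0 _ ha), ← mul_assoc]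
  simp only [MulChar.ringHomComp_apply, Units.val_mk0, eq_intCast]
  rw [h2, one_mul]

lemma zpow_eq_stdAddChar {d : ℕ} [NeZero d] {ω : ℂ}
    (hω : ω = Complex.exp (2 * Real.pi * Complex.I / d)) (n : ℤ) :
    ω ^ n = ZMod.stdAddChar ((n : ℤ) : ZMod d) := by
  rw [ZMod.stdAddChar_coe, hω, ← Complex.exp_int_mul]
  congr 1; ring

/-- If `B ≡ 2 * a * t (mod d)`, then `a * i ^ 2 + B * i ≡ a * (i + t) ^ 2 - a * t ^ 2 (mod d)`. -/
lemma complete_square {d : ℕ} (hd : d.Prime) (hodd : Odd d)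
    {ω : ℂ} (hω : ω = Complex.exp (2 * Real.pi * Complex.I / d))
    {a : ℤ} (ha : ¬ (d : ℤ) ∣ a) (t : ℤ) (B : ℤ) (hB : (d : ℤ) ∣ B - 2 * a * t) :
    ∑ i ∈ Finset.range d, ω ^ (a * (i : ℤ) ^ 2 + B * (i : ℤ)) =
        epsd d * (Real.sqrt d : ℂ) * (legSym d a : ℂ) * ω ^ (-(a * t ^ 2)) := by
  have := Fact.mk hd
  have ha' : (a : ZMod d) ≠ 0 := by rwa [Ne, ZMod.intCast_zmod_eq_zero_iff_dvd]
  have hd2 : d ≠ 2 := by rintro rfl; revert hodd; decide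
  have hB' : (B : ZMod d) = 2 * a * t := by
    rw [← sub_eq_zero]
    have := (ZMod.intCast_zmod_eq_zero_iff_dvd _ d).2 hB
    push_cast at this; exact this
  have hG : ∑ x : ZMod d, (ZMod.stdAddChar (x ^ 2) : ℂ) = epsd d * Real.sqrt d := by
    rw [← gauss_sum_one hodd, ← sum_range_zmod]
    refine Finset.sum_congr rfl fun i _ => ?_
    rw [← Int.cast_pow, ZMod.stdAddChar_coe]; push_cast; rfl
  simp_rw [zpow_eq_stdAddChar hω]
  push_cast
  rw [← hG, mul_comm _ (legSym d a : ℂ), ← sum_sq_eq hd2 ha', Finset.sum_mul,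
    ← Equiv.sum_comp (Equiv.addRight (t : ZMod d))]
  rw [← sum_range_zmod]
  refine Finset.sum_congr rfl fun i _ => ?_
  rw [← AddChar.map_add_eq_mul, hB']
  congr 1
  simp only [Equiv.coe_addRight]
  push_cast
  ring

/-- evaluation of the shifted quadratic Gauss sum
`∑_{i=0}^{d-1} ω^{a(i² + bi)}` for an odd prime `d`, even `a` with `d ∤ a`,
and a half-integer shift `b = c/2` (`c` odd); here `b' = b + d/2 = (c+d)/2`. -/
theorem shifted_quadratic_gauss_sum_half_integer
    (d : ℕ) (hd : d.Prime) (hodd : Odd d)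
    (ω : ℂ) (hω : ω = Complex.exp (2 * Real.pi * Complex.I / d))
    (a c : ℤ) (ha : ¬ (d : ℤ) ∣ a) (haeven : Even a) (hcodd : Odd c)
    (b' : ℤ) (hb' : b' = (c + (d : ℤ)) / 2) :
    (b' % 2 = 0 →
      ∑ i ∈ Finset.range d, ω ^ (a * (i : ℤ) ^ 2 + (a * c / 2) * (i : ℤ)) =
        epsd d * (Real.sqrt d : ℂ) * (legSym d a : ℂ) *
          ω ^ (-(a * b' ^ 2) / 4)) ∧
    (b' % 2 = 1 →
      ∑ i ∈ Finset.range d, ω ^ (a * (i : ℤ) ^ 2 + (a * c / 2) * (i : ℤ)) =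
        epsd d * (Real.sqrt d : ℂ) * (legSym d a : ℂ) *
          ω ^ (-(a * ((d : ℤ) - b') ^ 2) / 4)) := by
  obtain ⟨m, rfl⟩ := haeven.two_dvd
  have hdz : Odd (d : ℤ) := by exact_mod_cast hodd
  obtain ⟨u, hu⟩ := hcodd
  obtain ⟨v, hv⟩ := hdz
  -- `c + d` is even, so the integer division defining `b'` is exact.
  have hc : c = 2 * b' - d := by omega
  have hac : 2 * m * c / 2 = m * c := by
    rw [mul_assoc, Int.mul_ediv_cancel_left _ two_ne_zero]
  rw [hac]
  constructor
  · intro h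
    obtain ⟨t, rfl⟩ := Int.dvd_of_emod_eq_zero h
    have e : -(2 * m * (2 * t) ^ 2) / 4 = -(2 * m * t ^ 2) := by
      rw [show -(2 * m * (2 * t) ^ 2) = 4 * -(2 * m * t ^ 2) by ring,
        Int.mul_ediv_cancel_left _ (by norm_num)]
    rw [e]
    exact complete_square hd hodd hω ha t _ ⟨-m, by rw [hc]; ring⟩
  · intro h
    -- Here `b' ≡ -(d - b') (mod d)`, so the square is completed with `-t`, where `2 * t = d - b'`.
    obtain ⟨t, ht⟩ : ∃ t, (d : ℤ) - b' = 2 * t := ⟨((d : ℤ) - b') / 2, by omega⟩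
    have e : -(2 * m * (d - b') ^ 2) / 4 = -(2 * m * (-t) ^ 2) := by
      rw [ht, show -(2 * m * (2 * t) ^ 2) = 4 * -(2 * m * (-t) ^ 2) by ring,
        Int.mul_ediv_cancel_left _ (by norm_num)]
    rw [e]
    exact complete_square hd hodd hω ha (-t) _ ⟨m, by
      rw [hc, show b' = d - 2 * t by omega]; ring⟩

end
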